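/- The mixed relation τ₁σ₂σ₁ = σ₂σ₁τ₂ of the singular braid monoid holds for the Yang–Baxter matrices: (Q ⊗ I)·(I ⊗ R)·(R ⊗ I) = (I ⊗ R)·(R ⊗ I)·(I ⊗ Q), where I is the n×n identity matrix, ⊗ is the Kronecker product of matrices (so both sides are matrices indexed by (Fin n × Fin n) × Fin n), and · is matrix multiplication. -/

import Mathlib

open LaurentPolynomial Matrix Finset

/-- The Yang-Baxter matrix `R` for a positive crossing. -/
noncomputable def Rmat (n : ℕ) : Matrix (Fin n × Fin n) (Fin n × Fin n) (LaurentPolynomial ℤ) :=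
  fun p r =>
    if p.1 = r.1 ∧ p.2 = r.2 ∧ p.1 < p.2 then T 1 - T (-1)
    else if p.1 = p.2 ∧ p.2 = r.1 ∧ r.1 = r.2 then T 1
    else if p.1 = r.2 ∧ p.2 = r.1 ∧ p.1 ≠ p.2 then 1
    else 0

/-- The Yang-Baxter matrix `R̄` for a negative crossing. -/
noncomputable def Rbar (n : ℕ) : Matrix (Fin n × Fin n) (Fin n × Fin n) (LaurentPolynomial ℤ) :=
  fun p r =>
    if p.1 = r.1 ∧ p.2 = r.2 ∧ p.2 < p.1 then T (-1) - T 1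
    else if p.1 = p.2 ∧ p.2 = r.1 ∧ r.1 = r.2 then T (-1)
    else if p.1 = r.2 ∧ p.2 = r.1 ∧ p.1 ≠ p.2 then 1
    else 0

/-- The matrix `Q` for a singular crossing. -/
noncomputable def Qmat (n : ℕ) : Matrix (Fin n × Fin n) (Fin n × Fin n) (LaurentPolynomial ℤ) :=
  fun p r =>
    if p.1 = p.2 ∧ p.2 = r.1 ∧ r.1 = r.2 then T 1 + T (-1)
    else if p.1 = r.1 ∧ p.2 = r.2 ∧ p.1 < p.2 then T 1
    else if p.1 = r.1 ∧ p.2 = r.2 ∧ p.2 < p.1 then T (-1)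
    else if p.1 = r.2 ∧ p.2 = r.1 ∧ p.1 ≠ p.2 then 1
    else 0

/-- The spin of the index `i ∈ Fin n`: the corresponding element of
`{1-n, 3-n, …, n-3, n-1}`. -/
def spin (n : ℕ) (i : Fin n) : ℤ := 2 * (i : ℤ) - ((n : ℤ) - 1)

/-- The quantum integer `[m] = q^{m-1} + q^{m-3} + ⋯ + q^{1-m}`. -/
noncomputable def qint (m : ℕ) : LaurentPolynomial ℤ :=
  ∑ k ∈ Finset.range m, T (2 * (k : ℤ) - ((m : ℤ) - 1))

/-- `R ⊗ I`, as a matrix indexed by `(Fin n × Fin n) × Fin n`. -/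
noncomputable def RI (n : ℕ) :
    Matrix ((Fin n × Fin n) × Fin n) ((Fin n × Fin n) × Fin n) (LaurentPolynomial ℤ) :=
  Matrix.kronecker (Rmat n) (1 : Matrix (Fin n) (Fin n) (LaurentPolynomial ℤ))

/-- `I ⊗ R`, reindexed so that it is also a matrix indexed by `(Fin n × Fin n) × Fin n`. -/
noncomputable def IR (n : ℕ) :
    Matrix ((Fin n × Fin n) × Fin n) ((Fin n × Fin n) × Fin n) (LaurentPolynomial ℤ) :=
  Matrix.reindex (Equiv.prodAssoc (Fin n) (Fin n) (Fin n)).symm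
    (Equiv.prodAssoc (Fin n) (Fin n) (Fin n)).symm
    (Matrix.kronecker (1 : Matrix (Fin n) (Fin n) (LaurentPolynomial ℤ)) (Rmat n))

/-- `Q ⊗ I`, as a matrix indexed by `(Fin n × Fin n) × Fin n`. -/
noncomputable def QI (n : ℕ) :
    Matrix ((Fin n × Fin n) × Fin n) ((Fin n × Fin n) × Fin n) (LaurentPolynomial ℤ) :=
  Matrix.kronecker (Qmat n) (1 : Matrix (Fin n) (Fin n) (LaurentPolynomial ℤ))

/-- `I ⊗ Q`, reindexed so that it is also a matrix indexed by `(Fin n × Fin n) × Fin n`. -/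
noncomputable def IQ (n : ℕ) :
    Matrix ((Fin n × Fin n) × Fin n) ((Fin n × Fin n) × Fin n) (LaurentPolynomial ℤ) :=
  Matrix.reindex (Equiv.prodAssoc (Fin n) (Fin n) (Fin n)).symm
    (Equiv.prodAssoc (Fin n) (Fin n) (Fin n)).symm
    (Matrix.kronecker (1 : Matrix (Fin n) (Fin n) (LaurentPolynomial ℤ)) (Qmat n))

theorem Rmat_row (n : ℕ) (a b : Fin n) (f : Fin n → Fin n → LaurentPolynomial ℤ) :
    ∑ x, ∑ y, Rmat n (a, b) (x, y) * f x y =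
      (if a < b then (T 1 - T (-1)) * f a b else 0) +
      (if a = b then T 1 * f a a else f b a) := by
  have key : ∀ x y, Rmat n (a, b) (x, y) * f x y =
      (if a = x then if b = y then
        (if a < b then (T 1 - T (-1)) * f a b else 0) else 0 else 0) +
      (if b = x then if a = y then
        (if a = b then T 1 * f a a else f b a) else 0 else 0) := by
    intro x y
    simp only [Rmat]
    rcases lt_trichotomy a b with h | h | h <;>
    by_cases h1 : a = x <;> by_cases h2 : b = y <;> by_cases h3 : b = x <;>
      by_cases h4 : a = y <;> grind
  simp only [key, Finset.sum_add_distrib]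
  simp

theorem RI_row (n : ℕ) (M : Matrix ((Fin n × Fin n) × Fin n) ((Fin n × Fin n) × Fin n)
    (LaurentPolynomial ℤ)) (a b c : Fin n) (s) :
    (RI n * M) ((a, b), c) s =
      (if a < b then (T 1 - T (-1)) * M ((a, b), c) s else 0) +
      (if a = b then T 1 * M ((a, a), c) s else M ((b, a), c) s) := by
  rw [← Rmat_row n a b (fun x y => M ((x, y), c) s)]
  simp [Matrix.mul_apply, Fintype.sum_prod_type, RI, Matrix.one_apply]

theorem IR_row (n : ℕ) (M : Matrix ((Fin n × Fin n) × Fin n) ((Fin n × Fin n) × Fin n)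
    (LaurentPolynomial ℤ)) (a b c : Fin n) (s) :
    (IR n * M) ((a, b), c) s =
      (if b < c then (T 1 - T (-1)) * M ((a, b), c) s else 0) +
      (if b = c then T 1 * M ((a, b), b) s else M ((a, c), b) s) := by
  rw [← Rmat_row n b c (fun x y => M ((a, x), y) s)]
  simp [Matrix.mul_apply, Fintype.sum_prod_type, IR, Matrix.one_apply]

theorem braid_aux (n : ℕ) (M : Matrix ((Fin n × Fin n) × Fin n) ((Fin n × Fin n) × Fin n)
    (LaurentPolynomial ℤ)) :
    RI n * (IR n * (RI n * M)) = IR n * (RI n * (IR n * M)) := by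
  ext1 ⟨⟨a, b⟩, c⟩ s
  have hT : (T 1 : LaurentPolynomial ℤ) * T (-1) = 1 := by
    rw [← T_add]; simp
  simp only [RI_row, IR_row]
  generalize (T 1 : LaurentPolynomial ℤ) = q at *
  generalize (T (-1) : LaurentPolynomial ℤ) = p at *
  rcases lt_trichotomy a b with h1 | h1 | h1 <;>
  rcases lt_trichotomy b c with h2 | h2 | h2 <;>
  rcases lt_trichotomy a c with h3 | h3 | h3 <;>
  first
  | (exfalso; order)
  | (subst_vars
     simp only [*, lt_irrefl, not_lt_of_gt, ne_of_lt, ne_of_gt, if_true, if_false]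
     all_goals first | ring1 | grind)

theorem QI_eq (n : ℕ) : QI n = RI n + (T (-1) : LaurentPolynomial ℤ) • 1 := by
  ext1 ⟨⟨a, b⟩, c⟩ ⟨⟨x, y⟩, z⟩
  simp only [QI, RI, Qmat, Rmat, Matrix.kronecker, Matrix.kroneckerMap_apply, Matrix.add_apply,
    Matrix.smul_apply, Matrix.one_apply, Prod.mk.injEq, smul_eq_mul]
  rcases lt_trichotomy a b with h | h | h <;> by_cases hz : c = z <;>
    by_cases h1 : a = x <;> by_cases h2 : b = y <;> grind

theorem IQ_eq (n : ℕ) : IQ n = IR n + (T (-1) : LaurentPolynomial ℤ) • 1 := by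
  ext1 ⟨⟨c, a⟩, b⟩ ⟨⟨z, x⟩, y⟩
  simp only [IQ, IR, Qmat, Rmat, Matrix.kronecker, Matrix.kroneckerMap_apply, Matrix.add_apply,
    Matrix.smul_apply, Matrix.one_apply, Prod.mk.injEq, smul_eq_mul, Matrix.reindex_apply,
    Matrix.submatrix_apply, Equiv.symm_symm, Equiv.prodAssoc_apply]
  rcases lt_trichotomy a b with h | h | h <;> by_cases hz : c = z <;>
    by_cases h1 : a = x <;> by_cases h2 : b = y <;> grind

/-- The mixed relation `(Q ⊗ I)(I ⊗ R)(R ⊗ I) = (I ⊗ R)(R ⊗ I)(I ⊗ Q)`. -/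
theorem mixed_relation_pos (n : ℕ) (hn : 2 ≤ n) :
    QI n * IR n * RI n = IR n * RI n * IQ n := by
  have h := braid_aux n 1
  simp only [Matrix.mul_one] at h
  rw [QI_eq, IQ_eq]
  simp only [Matrix.add_mul, Matrix.mul_add, Matrix.mul_assoc, Matrix.smul_mul, Matrix.mul_smul,
    Matrix.one_mul, Matrix.mul_one, h]
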